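/- arXiv:math-ph/0308037 — 2 statements merged into one kernel-verified Lean document; each statement's English description precedes it below -/
import Mathlib

section
/- Let ρ be a faithful density operator on a separable Hilbert space H, and let σ be any state in the Araki neighbourhood of ρ: σ = ρ_X = exp(−(H₀+X)) where ρ = exp(−H₀) and X is a bounded operator satisfying the Araki condition for ρ (equivalently, σ is nearby ρ). Then the relative entropy S(ρ|σ) = Tr ρ(log ρ − log σ) is finite; indeed S(ρ|σ) = Tr(ρX), so |S(ρ|σ)| ≤ ‖X‖ · Tr ρ ≤ ‖X‖_A · Tr ρ. -/
open scoped InnerProductSpace ENNReal NNReal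
open MeasureTheory Metric Filter

noncomputable section

variable {H : Type*} [NormedAddCommGroup H] [InnerProductSpace ℂ H] [CompleteSpace H]
  [TopologicalSpace.SeparableSpace H]

/-- The real power `ρ ^ t` (for `t ≥ 0`) of a positive operator `ρ`, via the continuous
functional calculus. -/
def opow (ρ : H →L[ℂ] H) (t : ℝ) : H →L[ℂ] H := cfc (fun x : ℝ => x ^ t) ρ

/-- The (real) trace of an operator, computed along the Hilbert basis `b`. -/
def trElem {ι : Type*} (b : HilbertBasis ι ℂ H) (T : H →L[ℂ] H) : ℝ :=
  ∑' i, (⟪b i, T (b i)⟫_ℂ).re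

/-- `ρ` is a finite faithful weight: a positive, injective, trace-class operator
(trace-class being witnessed by summability of the diagonal in the Hilbert basis `b`). -/
def IsFiniteWeight {ι : Type*} (b : HilbertBasis ι ℂ H) (ρ : H →L[ℂ] H) : Prop :=
  0 ≤ ρ ∧ Function.Injective (⇑ρ) ∧ Summable (fun i => (⟪b i, ρ (b i)⟫_ℂ).re)

/-- `σ` is nearby `ρ`: there is `C > 1` with `C⁻¹ ρ ≤ σ ≤ C ρ` in the Loewner order. -/
def IsNearby (σ ρ : H →L[ℂ] H) : Prop :=
  ∃ C : ℝ, 1 < C ∧ C⁻¹ • ρ ≤ σ ∧ σ ≤ C • ρ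

/-- `F` is the Araki family `t ↦ ρ^t X ρ^{-t}` of `X` relative to `ρ`: a bounded holomorphic
`B(H)`-valued extension to the disc `|t| < 1/2` of `t ↦ ρ^t X ρ^{-t}`, the latter being
expressed by `F t * ρ^t = ρ^t * X` and `ρ^t * F (-t) = X * ρ^t` for real `0 ≤ t < 1/2`. -/
def IsArakiFamily (ρ X : H →L[ℂ] H) (F : ℂ → H →L[ℂ] H) : Prop :=
  DifferentiableOn ℂ F (ball (0:ℂ) (1/2)) ∧
  (∃ M : ℝ, ∀ t ∈ ball (0:ℂ) (1/2), ‖F t‖ ≤ M) ∧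
  (∀ t : ℝ, 0 ≤ t → t < 1/2 → F (t:ℂ) * opow ρ t = opow ρ t * X) ∧
  (∀ t : ℝ, 0 ≤ t → t < 1/2 → opow ρ t * F (-(t:ℂ)) = X * opow ρ t)

/-- `X` satisfies the Araki condition for `ρ`. -/
def SatisfiesAraki (ρ X : H →L[ℂ] H) : Prop := ∃ F, IsArakiFamily ρ X F

/-- The Araki norm `‖X‖_A = sup_{|t| < 1/2} ‖ρ^t X ρ^{-t}‖`. -/
def arakiNorm (ρ X : H →L[ℂ] H) : ℝ :=
  sInf {M : ℝ | 0 ≤ M ∧ ∃ F, IsArakiFamily ρ X F ∧ ∀ t ∈ ball (0:ℂ) (1/2), ‖F t‖ ≤ M}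

/-- `σ = exp (-(H₀ + X))` where `ρ = exp (-H₀)`: the semigroup `t ↦ σ^t` is the mild
(Duhamel) solution of the semigroup `t ↦ ρ^t` perturbed by the bounded operator `-X`,
i.e. `σ^t = ρ^t - ∫_0^t ρ^{t-s} X σ^s ds` for all `t ≥ 0`. -/
def IsExpPerturbed (ρ σ X : H →L[ℂ] H) : Prop :=
  ∀ t : ℝ, 0 ≤ t →
    opow σ t = opow ρ t - ∫ s in (0:ℝ)..t, opow ρ (t - s) * X * opow σ s

/-- The truncation `x ↦ -log (x + e^{-n})` of `-log`; it increases pointwise to `-log x`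
as `n → ∞` and is operator anti-monotone. -/
def negLogTrunc (n : ℕ) (x : ℝ) : ℝ := - Real.log (x + Real.exp (-(n:ℝ)))

/-- The regularised quadratic form `⟪ξ, (-log (ρ + e^{-n})) ξ⟫` of `H₀ = -log ρ`. -/
def negLogFormSeq (ρ : H →L[ℂ] H) (ξ : H) (n : ℕ) : ℝ :=
  (⟪ξ, (cfc (negLogTrunc n) ρ) ξ⟫_ℂ).re

/-- `ξ` lies in the form domain `Q(H₀) = Dom (H₀^{1/2})` of `H₀ = -log ρ`. -/
def InFormDomain (ρ : H →L[ℂ] H) (ξ : H) : Prop :=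
  BddAbove (Set.range (negLogFormSeq ρ ξ))

/-- The value `⟪ξ, H₀ ξ⟫` of the quadratic form of `H₀ = -log ρ` (a monotone limit). -/
def negLogForm (ρ : H →L[ℂ] H) (ξ : H) : ℝ := ⨆ n, negLogFormSeq ρ ξ n

/-- The regularised quadratic form `⟪ξ, (σ + e^{-n})⁻¹ ξ⟫` of `σ⁻¹`. -/
def invFormSeq (σ : H →L[ℂ] H) (ξ : H) (n : ℕ) : ℝ :=
  (⟪ξ, (cfc (fun x : ℝ => (x + Real.exp (-(n:ℝ)))⁻¹) σ) ξ⟫_ℂ).re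

/-- The quadratic form `⟪ξ, σ⁻¹ ξ⟫ ∈ [0, ∞]` of the (possibly unbounded) inverse `σ⁻¹`
of the injective positive operator `σ`, as a monotone limit of regularisations. -/
def invForm (σ : H →L[ℂ] H) (ξ : H) : ℝ≥0∞ :=
  ⨆ n : ℕ, ENNReal.ofReal (invFormSeq σ ξ n)

/-- `S` is the relative entropy `S(ρ|σ) = Tr (ρ (log ρ - log σ))`, obtained as the limit of
the regularised quantities `Tr (ρ (log (ρ + e^{-n}) - log (σ + e^{-n})))`. -/
def IsRelativeEntropy {ι : Type*} (b : HilbertBasis ι ℂ H) (ρ σ : H →L[ℂ] H) (S : ℝ) : Prop :=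
  Tendsto (fun n : ℕ => trElem b (ρ * (cfc (negLogTrunc n) σ - cfc (negLogTrunc n) ρ)))
    atTop (nhds S)

/-- The `n`-th term of the Matsubara (Dyson/expansional) series: the integral over the
ordered simplex `0 ≤ s₁ ≤ ⋯ ≤ sₙ ≤ 1` (of volume `1/n!`) of the product
`F(s₁ - 1/2) ⋯ F(sₙ - 1/2)`, where `F t = ρ^t X ρ^{-t}`. -/
def matsubaraTerm (F : ℂ → H →L[ℂ] H) (n : ℕ) : H →L[ℂ] H :=
  ∫ s in {s : Fin n → ℝ | (∀ i, s i ∈ Set.Icc (0:ℝ) 1) ∧ Monotone s},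
    (List.ofFn fun i => F (((s i - 1/2 : ℝ) : ℂ))).prod

/-!
Positive trace-class operators are compact, so `ρ` has an orthonormal eigenbasis `e k` with
eigenvalues `l k > 0`, and `σ` an eigenbasis `f j` with eigenvalues `m j > 0`. Between `e k` and
`f j` the Duhamel formula at time `1` reads
`m j * ⟪e k, f j⟫ = l k * ⟪e k, f j⟫ - c * ⟪e k, X (f j)⟫`, where
`c = ∫ s in 0..1, l k ^ (1 - s) * m j ^ s` is the logarithmic mean of `l k` and `m j`. Dividing
by `c` gives `⟪e k, X (f j)⟫ = (log (l k) - log (m j)) * ⟪e k, f j⟫`, the rigorous meaning of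
`X = log ρ - log σ`.

Since `x ↦ log (x + ε)` is a `1`-Lipschitz function of `log x`, the matrix elements of
`log (ρ + ε) - log (σ + ε)` are dominated by those of `X`, and they converge to them as `ε → 0`.
Dominated convergence, applied first to the Parseval expansion of each vector in the basis `f`
and then to `Tr (ρ T) = ∑ k, l k * ⟪e k, T (e k)⟫`, gives `S(ρ|σ) = Tr (ρ X)`.
-/

section HilbertBasis

variable {𝕜 E F ι : Type*} [RCLike 𝕜] [NormedAddCommGroup E] [InnerProductSpace 𝕜 E]
  [NormedAddCommGroup F] [NormedSpace 𝕜 F]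

local notation "⟪" x ", " y "⟫" => inner 𝕜 x y

theorem abs_re_inner_le_norm {x : E} (hx : ‖x‖ ≤ 1) (y : E) : |RCLike.re ⟪x, y⟫| ≤ ‖y‖ :=
  (RCLike.abs_re_le_norm _).trans
    ((norm_inner_le_norm x y).trans (mul_le_of_le_one_left (norm_nonneg y) hx))

theorem hasSum_norm_inner_sq (b : HilbertBasis ι 𝕜 E) (x : E) :
    HasSum (fun i => ‖⟪b i, x⟫‖ ^ 2) (‖x‖ ^ 2) := by
  have h := (b.hasSum_inner_mul_inner x x).mapL RCLike.reCLM
  simpa only [RCLike.reCLM_apply, inner_mul_symm_re_eq_norm, norm_mul, norm_inner_symm x, ← sq,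
    inner_self_eq_norm_sq] using h

theorem summable_norm_inner_mul_norm_inner (b : HilbertBasis ι 𝕜 E) (x y : E) :
    Summable fun i => ‖⟪b i, x⟫‖ * ‖⟪b i, y⟫‖ :=
  Real.summable_mul_of_Lp_Lq_of_nonneg (p := 2) (q := 2) .two_two
    (fun _ => norm_nonneg _) (fun _ => norm_nonneg _)
    (by simpa using (hasSum_norm_inner_sq b x).summable)
    (by simpa using (hasSum_norm_inner_sq b y).summable)

theorem tsum_norm_inner_mul_norm_inner_le (b : HilbertBasis ι 𝕜 E) (x y : E) :
    ∑' i, ‖⟪b i, x⟫‖ * ‖⟪b i, y⟫‖ ≤ ‖x‖ * ‖y‖ := by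
  have h := Real.inner_le_Lp_mul_Lq_tsum_of_nonneg (p := 2) (q := 2) .two_two
    (fun i => norm_nonneg ⟪b i, x⟫) (fun i => norm_nonneg ⟪b i, y⟫)
    (by simpa using (hasSum_norm_inner_sq b x).summable)
    (by simpa using (hasSum_norm_inner_sq b y).summable)
  simpa only [Real.rpow_ofNat, (hasSum_norm_inner_sq b _).tsum_eq, ← Real.sqrt_eq_rpow,
    Real.sqrt_sq (norm_nonneg _)] using h

theorem norm_le_norm_of_norm_inner_le (b : HilbertBasis ι 𝕜 E) {x y : E}
    (h : ∀ i, ‖⟪b i, x⟫‖ ≤ ‖⟪b i, y⟫‖) : ‖x‖ ≤ ‖y‖ :=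
  le_of_sq_le_sq (hasSum_le (fun i => pow_le_pow_left₀ (norm_nonneg _) (h i) 2)
    (hasSum_norm_inner_sq b x) (hasSum_norm_inner_sq b y)) (norm_nonneg y)

theorem tendsto_inner_of_norm_inner_le {α : Type*} {L : Filter α} (b : HilbertBasis ι 𝕜 E)
    {x : α → E} {y : E} (hle : ∀ a i, ‖⟪b i, x a⟫‖ ≤ ‖⟪b i, y⟫‖)
    (hlim : ∀ i, Tendsto (fun a => ⟪b i, x a⟫) L (nhds ⟪b i, y⟫)) (z : E) :
    Tendsto (fun a => ⟪z, x a⟫) L (nhds ⟪z, y⟫) := by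
  have hz (v : E) : ⟪z, v⟫ = ∑' i, ⟪z, b i⟫ * ⟪b i, v⟫ := (b.tsum_inner_mul_inner z v).symm
  simp only [hz (x _), hz y]
  refine tendsto_tsum_of_dominated_convergence (summable_norm_inner_mul_norm_inner b z y)
    (fun i => (hlim i).const_mul _) (.of_forall fun a i => ?_)
  rw [norm_mul, norm_inner_symm]
  exact mul_le_mul_of_nonneg_left (hle a i) (norm_nonneg _)

theorem clm_ext_hilbertBasis (b : HilbertBasis ι 𝕜 E) {A B : E →L[𝕜] F}
    (h : ∀ i, A (b i) = B (b i)) : A = B :=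
  ContinuousLinearMap.ext_on (Submodule.dense_iff_topologicalClosure_eq_top.mpr b.dense_span)
    (by rintro _ ⟨i, rfl⟩; exact h i)

theorem exists_hilbertBasis_forall_mem [CompleteSpace E] {V : ι → Submodule 𝕜 E}
    (hV : OrthogonalFamily 𝕜 (fun i => V i) fun i => (V i).subtypeₗᵢ)
    (hclosed : ∀ i, IsClosed (V i : Set E)) (hbot : (⨆ i, V i)ᗮ = ⊥) :
    ∃ (w : Set E) (e : HilbertBasis w 𝕜 E), ∀ k, ∃ i, e k ∈ V i := by
  have (i : ι) : CompleteSpace (V i) := (hclosed i).completeSpace_coe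
  choose u B _ using fun i => exists_hilbertBasis 𝕜 (V i)
  set v : (Σ i, u i) → E := fun a => B a.1 a.2
  have hv : Orthonormal 𝕜 ((↑) : Set.range v → E) :=
    (hV.orthonormal_sigma_orthonormal fun i => (B i).orthonormal).toSubtypeRange
  have hspan : (Submodule.span 𝕜 (Set.range ((↑) : Set.range v → E)))ᗮ = ⊥ := by
    rw [Subtype.range_coe, eq_bot_iff, ← hbot, ← Submodule.iInf_orthogonal, le_iInf_iff]
    intro i x hx y hy
    have hzero : (innerSL 𝕜 x).comp (V i).subtypeL = 0 := clm_ext_hilbertBasis (B i) fun j =>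
      (Submodule.mem_orthogonal' _ _).mp hx _ (Submodule.subset_span ⟨⟨i, j⟩, rfl⟩)
    exact inner_eq_zero_symm.mp (DFunLike.congr_fun hzero ⟨y, hy⟩)
  refine ⟨_, .mkOfOrthogonalEqBot hv hspan, ?_⟩
  rintro ⟨_, ⟨i, j⟩, rfl⟩
  rw [HilbertBasis.coe_mkOfOrthogonalEqBot]
  exact ⟨i, (B i j).2⟩

end HilbertBasis

section HilbertSchmidt

open InnerProductSpace

variable {𝕜 E F ι : Type*} [RCLike 𝕜] [NormedAddCommGroup E] [InnerProductSpace 𝕜 E]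
  [NormedAddCommGroup F] [NormedSpace 𝕜 F]

theorem norm_sum_rankOne_le {v : ι → E} (hv : Orthonormal 𝕜 v) (w : ι → F) (s : Finset ι) :
    ‖∑ i ∈ s, rankOne 𝕜 (w i) (v i)‖ ≤ √(∑ i ∈ s, ‖w i‖ ^ 2) := by
  refine ContinuousLinearMap.opNorm_le_bound _ (Real.sqrt_nonneg _) fun x => ?_
  calc ‖(∑ i ∈ s, rankOne 𝕜 (w i) (v i)) x‖
      = ‖∑ i ∈ s, inner 𝕜 (v i) x • w i‖ := by
        simp only [sum_apply, rankOne_apply]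
    _ ≤ ∑ i ∈ s, ‖w i‖ * ‖inner 𝕜 (v i) x‖ :=
        norm_sum_le_of_le _ fun i _ => by rw [norm_smul, mul_comm]
    _ ≤ √(∑ i ∈ s, ‖w i‖ ^ 2) * √(∑ i ∈ s, ‖inner 𝕜 (v i) x‖ ^ 2) :=
        Real.sum_mul_le_sqrt_mul_sqrt _ _ _
    _ ≤ √(∑ i ∈ s, ‖w i‖ ^ 2) * ‖x‖ := by
        gcongr
        exact Real.sqrt_le_iff.mpr ⟨norm_nonneg x, hv.sum_inner_products_le x⟩

theorem isCompactOperator_rankOne (y : F) (x : E) : IsCompactOperator (rankOne 𝕜 y x) :=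
  have h : IsCompactOperator (ContinuousLinearMap.toSpanSingleton 𝕜 y) :=
    isCompactOperator_of_locallyCompactSpace_rng _
  h.comp_clm (innerSL 𝕜 x)

variable [CompleteSpace F]

theorem hasSum_rankOne_of_summable_norm_sq (b : HilbertBasis ι 𝕜 E) {A : E →L[𝕜] F}
    (hA : Summable fun i => ‖A (b i)‖ ^ 2) :
    HasSum (fun i => rankOne 𝕜 (A (b i)) (b i)) A := by
  have hsum : Summable fun i => rankOne 𝕜 (A (b i)) (b i) := by
    refine summable_iff_vanishing_norm.mpr fun ε hε => ?_
    obtain ⟨s, hs⟩ := summable_iff_vanishing_norm.mp hA (ε ^ 2) (by positivity)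
    refine ⟨s, fun t ht => (norm_sum_rankOne_le b.orthonormal _ t).trans_lt ?_⟩
    rw [Real.sqrt_lt' hε]
    exact (Real.le_norm_self _).trans_lt (hs t ht)
  convert hsum.hasSum
  ext x
  have hpointwise := (b.hasSum_repr x).mapL A
  simp only [map_smul, b.repr_apply_apply] at hpointwise
  exact hpointwise.unique (hsum.hasSum.mapL (ContinuousLinearMap.apply 𝕜 F x))

theorem isCompactOperator_of_summable_norm_sq (b : HilbertBasis ι 𝕜 E) {A : E →L[𝕜] F}
    (hA : Summable fun i => ‖A (b i)‖ ^ 2) : IsCompactOperator A :=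
  isCompactOperator_of_tendsto (hasSum_rankOne_of_summable_norm_sq b hA)
    (.of_forall fun _ => Submodule.sum_mem (compactOperator (RingHom.id 𝕜) E F) fun i _ =>
      isCompactOperator_rankOne (A (b i)) (b i))

end HilbertSchmidt

section Eigenbasis

variable {𝕜 E ι κ : Type*} [RCLike 𝕜] [NormedAddCommGroup E] [InnerProductSpace 𝕜 E]

/-- The Hilbert basis `e` diagonalises the operator `A`, with the real number `l k` as the
eigenvalue of `e k`. -/
def IsEigenbasis (e : HilbertBasis κ 𝕜 E) (A : E →L[𝕜] E) (l : κ → ℝ) : Prop :=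
  ∀ k, A (e k) = (l k : 𝕜) • e k

theorem IsEigenbasis.inner_apply {e : HilbertBasis κ 𝕜 E} {A : E →L[𝕜] E} {l : κ → ℝ}
    (h : IsEigenbasis e A l) (k : κ) (x : E) : inner 𝕜 (e k) (A x) = l k * inner 𝕜 (e k) x := by
  refine DFunLike.congr_fun (clm_ext_hilbertBasis e
    (A := (innerSL 𝕜 (e k)).comp A) (B := (l k : 𝕜) • innerSL 𝕜 (e k)) fun j => ?_) x
  rcases eq_or_ne k j with rfl | hkj
  · simp [h k]
  · simp [h j, e.orthonormal.inner_eq_zero hkj]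

theorem IsEigenbasis.hasSum_inner {e : HilbertBasis κ 𝕜 E} {A : E →L[𝕜] E} {l : κ → ℝ}
    (h : IsEigenbasis e A l) (x y : E) :
    HasSum (fun k => (l k : 𝕜) * (inner 𝕜 x (e k) * inner 𝕜 (e k) y)) (inner 𝕜 x (A y)) := by
  simpa only [h.inner_apply, mul_left_comm] using e.hasSum_inner_mul_inner x (A y)

protected theorem IsEigenbasis.hasSum_norm_inner_sq {e : HilbertBasis κ 𝕜 E} {A : E →L[𝕜] E}
    {l : κ → ℝ} (h : IsEigenbasis e A l) (x : E) :
    HasSum (fun k => l k * ‖inner 𝕜 x (e k)‖ ^ 2) (RCLike.re (inner 𝕜 x (A x))) := by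
  simpa only [RCLike.reCLM_apply, RCLike.re_ofReal_mul, inner_mul_symm_re_eq_norm, norm_mul,
    norm_inner_symm (e _) x, ← sq] using (h.hasSum_inner x x).mapL RCLike.reCLM

protected theorem IsEigenbasis.summable (b : HilbertBasis ι 𝕜 E) {e : HilbertBasis κ 𝕜 E}
    {A : E →L[𝕜] E} {l : κ → ℝ} (h : IsEigenbasis e A l) (hl : ∀ k, 0 ≤ l k)
    (hb : Summable fun i => RCLike.re (inner 𝕜 (b i) (A (b i)))) : Summable l := by
  have hnonneg (p : κ × ι) : 0 ≤ l p.1 * ‖inner 𝕜 (b p.2) (e p.1)‖ ^ 2 :=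
    mul_nonneg (hl _) (sq_nonneg _)
  have hdouble : Summable fun p : κ × ι => l p.1 * ‖inner 𝕜 (b p.2) (e p.1)‖ ^ 2 := by
    refine Summable.prod_symm ((summable_prod_of_nonneg fun p => hnonneg p.swap).mpr
      ⟨fun i => (h.hasSum_norm_inner_sq (b i)).summable, ?_⟩)
    simpa only [Prod.fst_swap, Prod.snd_swap, (h.hasSum_norm_inner_sq _).tsum_eq] using hb
  simpa only [tsum_mul_left, (hasSum_norm_inner_sq b _).tsum_eq, e.orthonormal.norm_eq_one,
    one_pow, mul_one] using ((summable_prod_of_nonneg hnonneg).mp hdouble).2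

theorem exists_isEigenbasis_of_isCompactOperator [CompleteSpace E] {A : E →L[𝕜] E}
    (hc : IsCompactOperator A) (hsym : (A : E →ₗ[𝕜] E).IsSymmetric) :
    ∃ (w : Set E) (e : HilbertBasis w 𝕜 E) (l : w → ℝ), IsEigenbasis e A l := by
  obtain ⟨w, e, he⟩ := exists_hilbertBasis_forall_mem hsym.orthogonalFamily_eigenspaces
    (fun _ => ContinuousLinearMap.isClosed_eigenspace ..)
    (ContinuousLinearMap.orthogonalComplement_iSup_eigenspaces_eq_bot hc hsym)
  choose μ hμ using he
  refine ⟨w, e, fun k => RCLike.re (μ k), fun k => ?_⟩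
  have hreal : starRingEnd 𝕜 (μ k) = μ k := hsym.conj_eigenvalue_eq_self
    (Module.End.hasEigenvalue_of_hasEigenvector ⟨hμ k, e.orthonormal.ne_zero k⟩)
  rw [RCLike.conj_eq_iff_re.mp hreal]
  exact Module.End.mem_eigenspace_iff.mp (hμ k)

theorem IsEigenbasis.pos {e : HilbertBasis κ 𝕜 E} {A : E →L[𝕜] E} {l : κ → ℝ}
    (h : IsEigenbasis e A l) (hA : A.IsPositive) (hinj : Function.Injective A) (k : κ) :
    0 < l k := by
  have hdiag : RCLike.re (inner 𝕜 (e k) (A (e k))) = l k := by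
    simp [h k, inner_smul_right, e.orthonormal.norm_eq_one]
  refine (hdiag ▸ hA.re_inner_nonneg_right (e k)).lt_of_ne' fun hzero => ?_
  have hker : A (e k) = 0 := by rw [h k, hzero, RCLike.ofReal_zero, zero_smul]
  exact e.orthonormal.ne_zero k ((map_eq_zero_iff A hinj).mp hker)

end Eigenbasis

section ContinuousFunctionalCalculus

theorem continuousOn_cfc_fun_of_continuousOn_prod {X R A : Type*} {p : A → Prop} [CommSemiring R]
    [StarRing R] [MetricSpace R] [IsTopologicalSemiring R] [ContinuousStar R] [Ring A] [StarRing A]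
    [TopologicalSpace A] [Algebra R A] [ContinuousFunctionalCalculus R A p] [TopologicalSpace X]
    {s : Set X} {f : X → R → R} {a : A}
    (hf : ContinuousOn f.uncurry (s ×ˢ spectrum R a)) :
    ContinuousOn (fun x => cfc (f x) a) s := by
  have hcompact := ContinuousFunctionalCalculus.isCompact_spectrum (R := R) a
  refine fun x hx => continuousWithinAt_cfc_fun ?_ ?_
  · intro u hu
    obtain ⟨v, hv, hvu⟩ := hcompact.mem_uniformity_of_prod hf hx (symm_le_uniformity hu)
    exact mem_of_superset hv hvu
  · filter_upwards [self_mem_nhdsWithin] with y hy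
    exact hf.comp (f := fun r => (y, r)) (by fun_prop) fun r hr => ⟨hy, hr⟩

end ContinuousFunctionalCalculus

section LogarithmicMean

theorem integral_rpow_mul_rpow_pos {a b : ℝ} (ha : 0 < a) (hb : 0 < b) :
    0 < ∫ s in (0 : ℝ)..1, a ^ (1 - s) * b ^ s :=
  intervalIntegral.intervalIntegral_pos_of_pos
    (Continuous.intervalIntegrable (by fun_prop (disch := simp [ha.ne', hb.ne'])) _ _)
    (fun _ => by positivity) zero_lt_one

theorem log_sub_log_mul_integral_rpow_mul_rpow {a b : ℝ} (ha : 0 < a) (hb : 0 < b) :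
    (Real.log b - Real.log a) * ∫ s in (0 : ℝ)..1, a ^ (1 - s) * b ^ s = b - a := by
  have hderiv (s : ℝ) : HasDerivAt (fun s : ℝ => a ^ (1 - s) * b ^ s)
      ((Real.log b - Real.log a) * (a ^ (1 - s) * b ^ s)) s :=
    ((((hasDerivAt_id' s).const_sub 1).const_rpow ha).mul
      ((hasDerivAt_id' s).const_rpow hb)).congr_deriv (by ring)
  have hcont : Continuous fun s : ℝ => (Real.log b - Real.log a) * (a ^ (1 - s) * b ^ s) := by
    fun_prop (disch := simp [ha.ne', hb.ne'])
  rw [← intervalIntegral.integral_const_mul,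
    intervalIntegral.integral_eq_sub_of_hasDerivAt (fun s _ => hderiv s)
      (hcont.intervalIntegrable _ _)]
  simp

end LogarithmicMean

section TruncatedLogarithm

theorem continuousOn_negLogTrunc (n : ℕ) : ContinuousOn (negLogTrunc n) (Set.Ici 0) :=
  (ContinuousOn.log (by fun_prop) fun _ hx =>
    (add_pos_of_nonneg_of_pos hx (Real.exp_pos _)).ne').neg

theorem tendsto_negLogTrunc {x : ℝ} (hx : x ≠ 0) :
    Tendsto (fun n : ℕ => negLogTrunc n x) atTop (nhds (-Real.log x)) := by
  have hexp : Tendsto (fun n : ℕ => Real.exp (-(n : ℝ))) atTop (nhds 0) :=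
    Real.tendsto_exp_neg_atTop_nhds_zero.comp tendsto_natCast_atTop_atTop
  have hadd : Tendsto (fun n : ℕ => x + Real.exp (-(n : ℝ))) atTop (nhds x) := by
    simpa using hexp.const_add x
  exact (hadd.log hx).neg

theorem abs_negLogTrunc_sub_le (n : ℕ) {x y : ℝ} (hx : 0 < x) (hy : 0 < y) :
    |negLogTrunc n x - negLogTrunc n y| ≤ |Real.log x - Real.log y| := by
  wlog hxy : x ≤ y generalizing x y
  · rw [abs_sub_comm, abs_sub_comm (Real.log x)]
    exact this hy hx (le_of_not_ge hxy)
  unfold negLogTrunc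
  set ε := Real.exp (-(n : ℝ))
  have hε : 0 < ε := Real.exp_pos _
  have hmono : Real.log (x + ε) ≤ Real.log (y + ε) := Real.log_le_log (by positivity) (by gcongr)
  -- The factor `(x + ε) / x` by which truncation enlarges the argument decreases with `x`.
  have hcontract : Real.log (y + ε) + Real.log x ≤ Real.log (x + ε) + Real.log y := by
    rw [← Real.log_mul (by positivity) hx.ne', ← Real.log_mul (by positivity) hy.ne']
    exact Real.log_le_log (by positivity) (by nlinarith)
  rw [abs_of_nonneg (by linarith), abs_of_nonpos (by linarith [Real.log_le_log hx hxy])]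
  linarith

end TruncatedLogarithm

section ComplexHilbertSpace

variable {E ι κ κ' : Type*} [NormedAddCommGroup E] [InnerProductSpace ℂ E] [CompleteSpace E]

theorem cfc_apply_eq_smul_of_apply_eq_smul {A : E →L[ℂ] E} (hA : IsSelfAdjoint A) {f : ℝ → ℝ}
    (hf : ContinuousOn f (spectrum ℝ A)) {x : E} {r : ℝ} (hx : A x = (r : ℂ) • x) :
    cfc f A x = (f r : ℂ) • x := by
  rcases eq_or_ne x 0 with rfl | hx0
  · simp
  have hr : r ∈ spectrum ℝ A := by
    rw [← spectrum.algebraMap_mem_iff ℂ, ContinuousLinearMap.spectrum_eq]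
    exact (Module.End.hasEigenvalue_of_hasEigenvector
      ⟨Module.End.mem_eigenspace_iff.mpr hx, hx0⟩).mem_spectrum
  rw [cfc_apply f A]
  suffices ∀ g : C(spectrum ℝ A, ℝ), cfcHom hA g x = (g ⟨r, hr⟩ : ℂ) • x from this _
  intro g
  induction g using ContinuousMap.induction_on_of_compact with
  | const c =>
    rw [show ContinuousMap.const (spectrum ℝ A) c = algebraMap ℝ _ c from rfl,
      AlgHomClass.commutes, Algebra.algebraMap_eq_smul_one]
    simp
  | id => rwa [cfcHom_id hA]
  | star_id => rwa [map_star, cfcHom_id, hA.star_eq]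
  | add f g hf hg => simp [hf, hg, add_smul]
  | mul f g hf hg => simp [hf, hg, mul_smul, mul_comm (f _ : ℂ)]
  | frequently f hf =>
    have hclosed : IsClosed {g : C(spectrum ℝ A, ℝ) | cfcHom hA g x = (g ⟨r, hr⟩ : ℂ) • x} :=
      isClosed_eq (by fun_prop) (by fun_prop)
    exact hclosed.mem_of_frequently_of_tendsto hf tendsto_id

theorem isCompactOperator_of_nonneg_of_summable_inner (b : HilbertBasis ι ℂ E) {A : E →L[ℂ] E}
    (hA : 0 ≤ A) (hb : Summable fun i => (⟪b i, A (b i)⟫_ℂ).re) : IsCompactOperator A := by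
  have hsqrt : CFC.sqrt A * CFC.sqrt A = A := CFC.sqrt_mul_sqrt_self A hA
  have hsym := (CFC.sqrt_nonneg A).isSelfAdjoint.isSymmetric
  have hnorm (i : ι) : (⟪b i, A (b i)⟫_ℂ).re = ‖CFC.sqrt A (b i)‖ ^ 2 := by
    conv_lhs => rw [← hsqrt]
    exact (congrArg Complex.re (hsym _ _).symm).trans (inner_self_eq_norm_sq (𝕜 := ℂ) _)
  rw [← hsqrt]
  exact (isCompactOperator_of_summable_norm_sq b (by simpa only [hnorm] using hb)).clm_comp _

theorem IsFiniteWeight.exists_isEigenbasis {b : HilbertBasis ι ℂ E} {ρ : E →L[ℂ] E}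
    (hρ : IsFiniteWeight b ρ) :
    ∃ (w : Set E) (e : HilbertBasis w ℂ E) (l : w → ℝ), IsEigenbasis e ρ l ∧ ∀ k, 0 < l k := by
  have hpos : ρ.IsPositive := (ContinuousLinearMap.nonneg_iff_isPositive ρ).mp hρ.1
  obtain ⟨w, e, l, he⟩ := exists_isEigenbasis_of_isCompactOperator
    (isCompactOperator_of_nonneg_of_summable_inner b hρ.1 hρ.2.2) hpos.isSymmetric
  exact ⟨w, e, l, he, he.pos hpos hρ.2.1⟩

theorem summable_mul_inner_mul_inner (b : HilbertBasis ι ℂ E) {l : κ → ℝ} (hl : Summable l)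
    {v : κ → E} (hv : ∀ k, ‖v k‖ ≤ 1) (T : E →L[ℂ] E) :
    Summable fun p : κ × ι => (l p.1 : ℂ) * (⟪b p.2, v p.1⟫_ℂ * ⟪v p.1, T (b p.2)⟫_ℂ) := by
  have hnorm (k : κ) (i : ι) : ‖(l k : ℂ) * (⟪b i, v k⟫_ℂ * ⟪v k, T (b i)⟫_ℂ)‖ =
      |l k| * (‖⟪b i, v k⟫_ℂ‖ * ‖⟪b i, T.adjoint (v k)⟫_ℂ‖) := by
    rw [norm_mul, norm_mul, Complex.norm_real, Real.norm_eq_abs, ← T.adjoint_inner_left,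
      norm_inner_symm (T.adjoint _)]
  have hbound (k : κ) : ‖v k‖ * ‖T.adjoint (v k)‖ ≤ ‖T.adjoint‖ :=
    (mul_le_of_le_one_left (norm_nonneg _) (hv k)).trans (T.adjoint.unit_le_opNorm _ (hv k))
  refine .of_norm ((summable_prod_of_nonneg fun _ => norm_nonneg _).mpr ⟨fun k => ?_, ?_⟩)
  · simpa only [hnorm] using (summable_norm_inner_mul_norm_inner b _ _).mul_left |l k|
  · refine .of_nonneg_of_le (fun _ => tsum_nonneg fun _ => norm_nonneg _) (fun k => ?_)
      (hl.abs.mul_right ‖T.adjoint‖)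
    simp only [hnorm, tsum_mul_left]
    exact mul_le_mul_of_nonneg_left
      ((tsum_norm_inner_mul_norm_inner_le b _ _).trans (hbound k)) (abs_nonneg _)

theorem IsEigenbasis.trElem_mul (b : HilbertBasis ι ℂ E) {e : HilbertBasis κ ℂ E}
    {A : E →L[ℂ] E} {l : κ → ℝ} (h : IsEigenbasis e A l) (hl : Summable l) (T : E →L[ℂ] E) :
    trElem b (A * T) = ∑' k, l k * (⟪e k, T (e k)⟫_ℂ).re := by
  have hsum := summable_mul_inner_mul_inner b hl (fun k => (e.orthonormal.norm_eq_one k).le) T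
  have hrow (i : ι) : HasSum (fun k => (l k : ℂ) * (⟪b i, e k⟫_ℂ * ⟪e k, T (b i)⟫_ℂ))
      ⟪b i, (A * T) (b i)⟫_ℂ := h.hasSum_inner (b i) (T (b i))
  have hcol (k : κ) : HasSum (fun i => (l k : ℂ) * (⟪b i, e k⟫_ℂ * ⟪e k, T (b i)⟫_ℂ))
      (l k * ⟪e k, T (e k)⟫_ℂ) := by
    simpa only [T.adjoint_inner_left, mul_comm ⟪b _, e k⟫_ℂ] using
      (b.hasSum_inner_mul_inner (T.adjoint (e k)) (e k)).mul_left (l k : ℂ)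
  have htrace := ((Equiv.prodComm ι κ).hasSum_iff.mpr hsum.hasSum).prod_fiberwise hrow
  have heigen := hsum.hasSum.prod_fiberwise hcol
  simpa only [trElem, Complex.re_ofReal_mul] using
    (Complex.hasSum_re htrace).tsum_eq.trans (Complex.hasSum_re heigen).tsum_eq.symm

theorem IsEigenbasis.trElem_eq_tsum (b : HilbertBasis ι ℂ E) {e : HilbertBasis κ ℂ E}
    {A : E →L[ℂ] E} {l : κ → ℝ} (h : IsEigenbasis e A l) (hl : Summable l) :
    trElem b A = ∑' k, l k := by
  simpa [e.orthonormal.norm_eq_one] using h.trElem_mul b hl 1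

theorem IsEigenbasis.abs_trElem_mul_le (b : HilbertBasis ι ℂ E) {e : HilbertBasis κ ℂ E}
    {A : E →L[ℂ] E} {l : κ → ℝ} (h : IsEigenbasis e A l) (hl : Summable l) (hl0 : ∀ k, 0 ≤ l k)
    (T : E →L[ℂ] E) : |trElem b (A * T)| ≤ ‖T‖ * trElem b A := by
  rw [h.trElem_mul b hl, h.trElem_eq_tsum b hl, ← tsum_mul_left, ← Real.norm_eq_abs]
  refine tsum_of_norm_bounded (hl.mul_left ‖T‖).hasSum fun k => ?_
  rw [norm_mul, Real.norm_of_nonneg (hl0 k), mul_comm]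
  refine mul_le_mul_of_nonneg_right ?_ (hl0 k)
  exact (abs_re_inner_le_norm (𝕜 := ℂ) (e.orthonormal.norm_eq_one k).le _).trans
    (T.unit_le_opNorm _ (e.orthonormal.norm_eq_one k).le)

theorem IsEigenbasis.tendsto_trElem_mul {α : Type*} {L : Filter α} (b : HilbertBasis ι ℂ E)
    {e : HilbertBasis κ ℂ E} {A : E →L[ℂ] E} {l : κ → ℝ} (h : IsEigenbasis e A l)
    (hl : Summable l) {T : α → E →L[ℂ] E} {T₀ : E →L[ℂ] E} {C : ℝ}
    (hbound : ∀ a k, ‖T a (e k)‖ ≤ C)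
    (hlim : ∀ k, Tendsto (fun a => (⟪e k, T a (e k)⟫_ℂ).re) L (nhds (⟪e k, T₀ (e k)⟫_ℂ).re)) :
    Tendsto (fun a => trElem b (A * T a)) L (nhds (trElem b (A * T₀))) := by
  simp only [h.trElem_mul b hl]
  refine tendsto_tsum_of_dominated_convergence (hl.abs.mul_right C)
    (fun k => (hlim k).const_mul _) (.of_forall fun a k => ?_)
  rw [norm_mul]
  refine mul_le_mul_of_nonneg_left ?_ (abs_nonneg _)
  exact (abs_re_inner_le_norm (𝕜 := ℂ) (e.orthonormal.norm_eq_one k).le _).trans (hbound a k)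

protected theorem IsEigenbasis.cfc {e : HilbertBasis κ ℂ E} {A : E →L[ℂ] E} {l : κ → ℝ}
    (h : IsEigenbasis e A l) (hA : IsSelfAdjoint A) {f : ℝ → ℝ}
    (hf : ContinuousOn f (spectrum ℝ A)) : IsEigenbasis e (cfc f A) (f ∘ l) :=
  fun k => cfc_apply_eq_smul_of_apply_eq_smul hA hf (h k)

protected theorem IsEigenbasis.opow {e : HilbertBasis κ ℂ E} {A : E →L[ℂ] E} {l : κ → ℝ}
    (h : IsEigenbasis e A l) (hA : IsSelfAdjoint A) {t : ℝ} (ht : 0 ≤ t) :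
    IsEigenbasis e (opow A t) fun k => l k ^ t :=
  h.cfc hA (Real.continuous_rpow_const ht).continuousOn

theorem opow_zero {A : E →L[ℂ] E} (hA : IsSelfAdjoint A) : opow A 0 = 1 := by
  simpa only [opow, Real.rpow_zero] using cfc_const_one ℝ A hA

theorem opow_one {A : E →L[ℂ] E} (hA : IsSelfAdjoint A) : opow A 1 = A := by
  simpa only [opow, Real.rpow_one] using cfc_id' ℝ A hA

theorem norm_opow_le {A : E →L[ℂ] E} (hA : 0 ≤ A) {t : ℝ} (ht : t ∈ Set.Icc (0 : ℝ) 1) :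
    ‖opow A t‖ ≤ max 1 ‖A‖ := by
  refine norm_cfc_le (by positivity) fun x hx => ?_
  have hx0 : 0 ≤ x := spectrum_nonneg_of_nonneg hA hx
  have hxA : x ≤ max 1 ‖A‖ := by
    refine le_max_of_le_right ((Real.le_norm_self x).trans ?_)
    exact (spectrum.norm_le_norm_mul_of_mem hx).trans
      (mul_le_of_le_one_right (norm_nonneg A) ContinuousLinearMap.norm_id_le)
  rw [Real.norm_of_nonneg (Real.rpow_nonneg hx0 t)]
  calc x ^ t ≤ max 1 ‖A‖ ^ t := Real.rpow_le_rpow hx0 hxA ht.1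
    _ ≤ max 1 ‖A‖ := Real.rpow_le_self_of_one_le (le_max_left _ _) ht.2

theorem continuousOn_opow (A : E →L[ℂ] E) : ContinuousOn (opow A) (Set.Ioi 0) := by
  refine continuousOn_cfc_fun_of_continuousOn_prod fun p hp => ?_
  exact (Real.continuousAt_rpow_of_pos (p.2, p.1) hp.1).comp_continuousWithinAt
    (f := fun p : ℝ × ℝ => (p.2, p.1)) (by fun_prop)

theorem intervalIntegrable_opow_mul_mul_opow {A B : E →L[ℂ] E} (hA : 0 ≤ A) (hB : 0 ≤ B)
    (T : E →L[ℂ] E) :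
    IntervalIntegrable (fun s => opow A (1 - s) * T * opow B s) volume 0 1 := by
  rw [intervalIntegrable_iff_integrableOn_Ioo_of_le zero_le_one]
  refine .of_bound (C := max 1 ‖A‖ * ‖T‖ * max 1 ‖B‖) (by simp) ?_ ?_
  · refine ContinuousOn.aestronglyMeasurable ?_ measurableSet_Ioo
    exact (((continuousOn_opow A).comp (by fun_prop) fun s hs => sub_pos.mpr hs.2).mul
      continuousOn_const).mul ((continuousOn_opow B).mono fun s hs => hs.1)
  · refine (ae_restrict_iff' measurableSet_Ioo).mpr (.of_forall fun s hs => ?_)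
    have hs' : s ∈ Set.Icc (0 : ℝ) 1 := Set.Ioo_subset_Icc_self hs
    calc ‖opow A (1 - s) * T * opow B s‖ ≤ ‖opow A (1 - s)‖ * ‖T‖ * ‖opow B s‖ :=
          norm_mul₃_le
      _ ≤ max 1 ‖A‖ * ‖T‖ * max 1 ‖B‖ := by
          gcongr
          · exact norm_opow_le hA (Set.Icc.mem_iff_one_sub_mem.mp hs')
          · exact norm_opow_le hB hs'

theorem IsEigenbasis.inner_integral_opow_mul_mul_opow {e : HilbertBasis κ ℂ E}
    {f : HilbertBasis κ' ℂ E} {A B : E →L[ℂ] E} {l : κ → ℝ} {m : κ' → ℝ}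
    (he : IsEigenbasis e A l) (hf : IsEigenbasis f B m) (hA : 0 ≤ A) (hB : 0 ≤ B)
    (T : E →L[ℂ] E) (k : κ) (j : κ') :
    ⟪e k, (∫ s in (0 : ℝ)..1, opow A (1 - s) * T * opow B s) (f j)⟫_ℂ =
      (∫ s in (0 : ℝ)..1, l k ^ (1 - s) * m j ^ s : ℝ) * ⟪e k, T (f j)⟫_ℂ := by
  let Φ : (E →L[ℂ] E) →L[ℂ] ℂ := (innerSL ℂ (e k)).comp (ContinuousLinearMap.apply ℂ E (f j))
  have hΦ : ∀ s ∈ Set.uIcc (0 : ℝ) 1, Φ (opow A (1 - s) * T * opow B s) =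
      (l k ^ (1 - s) * m j ^ s : ℝ) * ⟪e k, T (f j)⟫_ℂ := by
    intro s hs
    rw [Set.uIcc_of_le zero_le_one] at hs
    have hleft := he.opow hA.isSelfAdjoint (sub_nonneg.mpr hs.2)
    have hright := hf.opow hB.isSelfAdjoint hs.1
    calc Φ (opow A (1 - s) * T * opow B s) = ⟪e k, opow A (1 - s) (T (opow B s (f j)))⟫_ℂ := rfl
      _ = ((l k ^ (1 - s) : ℝ) : ℂ) * (((m j ^ s : ℝ) : ℂ) * ⟪e k, T (f j)⟫_ℂ) := by
          rw [hleft.inner_apply, hright j, map_smul, inner_smul_right]; rfl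
      _ = _ := by push_cast; ring
  calc _ = ∫ s in (0 : ℝ)..1, Φ (opow A (1 - s) * T * opow B s) :=
        (Φ.intervalIntegral_comp_comm (intervalIntegrable_opow_mul_mul_opow hA hB T)).symm
    _ = _ := by
        rw [intervalIntegral.integral_congr hΦ, intervalIntegral.integral_mul_const,
          intervalIntegral.integral_ofReal]

theorem IsExpPerturbed.inner_apply {ρ σ X : E →L[ℂ] E} (h : IsExpPerturbed ρ σ X) (hρ : 0 ≤ ρ)
    (hσ : 0 ≤ σ) {e : HilbertBasis κ ℂ E} {f : HilbertBasis κ' ℂ E} {l : κ → ℝ} {m : κ' → ℝ}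
    (he : IsEigenbasis e ρ l) (hf : IsEigenbasis f σ m) {k : κ} {j : κ'} (hl : 0 < l k)
    (hm : 0 < m j) :
    ⟪e k, X (f j)⟫_ℂ = (Real.log (l k) - Real.log (m j) : ℝ) * ⟪e k, f j⟫_ℂ := by
  have hduhamel : σ = ρ - ∫ s in (0 : ℝ)..1, opow ρ (1 - s) * X * opow σ s := by
    simpa only [opow_one hρ.isSelfAdjoint, opow_one hσ.isSelfAdjoint] using h 1 zero_le_one
  set c := ∫ s in (0 : ℝ)..1, l k ^ (1 - s) * m j ^ s
  have hc0 : (c : ℂ) ≠ 0 := by exact_mod_cast (integral_rpow_mul_rpow_pos hl hm).ne'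
  have hlog : ((Real.log (m j) - Real.log (l k) : ℝ) : ℂ) * c = m j - l k := by
    exact_mod_cast log_sub_log_mul_integral_rpow_mul_rpow hl hm
  have hmatrix : (m j : ℂ) * ⟪e k, f j⟫_ℂ = l k * ⟪e k, f j⟫_ℂ - c * ⟪e k, X (f j)⟫_ℂ := by
    calc (m j : ℂ) * ⟪e k, f j⟫_ℂ = ⟪e k, σ (f j)⟫_ℂ := by
          rw [hf j, inner_smul_right]; rfl
      _ = ⟪e k, ρ (f j)⟫_ℂ -
          ⟪e k, (∫ s in (0 : ℝ)..1, opow ρ (1 - s) * X * opow σ s) (f j)⟫_ℂ := by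
          conv_lhs => rw [hduhamel, sub_apply, inner_sub_right]
      _ = _ := by
          rw [he.inner_apply, he.inner_integral_opow_mul_mul_opow hf hρ hσ]; rfl
  apply mul_left_cancel₀ hc0
  push_cast at hlog ⊢
  linear_combination ⟪e k, f j⟫_ℂ * hlog + hmatrix

theorem IsEigenbasis.inner_cfc_sub_cfc_apply {e : HilbertBasis κ ℂ E} {f : HilbertBasis κ' ℂ E}
    {A B : E →L[ℂ] E} {l : κ → ℝ} {m : κ' → ℝ} (he : IsEigenbasis e A l)
    (hf : IsEigenbasis f B m) (hA : IsSelfAdjoint A) (hB : IsSelfAdjoint B) {g : ℝ → ℝ}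
    (hgA : ContinuousOn g (spectrum ℝ A)) (hgB : ContinuousOn g (spectrum ℝ B)) (k : κ) (j : κ') :
    ⟪f j, (_root_.cfc g B - _root_.cfc g A) (e k)⟫_ℂ = (g (m j) - g (l k) : ℝ) * ⟪f j, e k⟫_ℂ := by
  have hleft := (hf.cfc hB hgB).inner_apply j (e k)
  have hright : ⟪f j, _root_.cfc g A (e k)⟫_ℂ = g (l k) * ⟪f j, e k⟫_ℂ := by
    rw [he.cfc hA hgA k, inner_smul_right]; rfl
  rw [sub_apply, inner_sub_right, hleft, hright, Complex.ofReal_sub, sub_mul]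
  rfl

theorem isRelativeEntropy_trElem_mul (b : HilbertBasis ι ℂ E) {ρ σ X : E →L[ℂ] E}
    {e : HilbertBasis κ ℂ E} {f : HilbertBasis κ' ℂ E} {l : κ → ℝ} {m : κ' → ℝ}
    (h : IsExpPerturbed ρ σ X) (hρ : 0 ≤ ρ) (hσ : 0 ≤ σ) (he : IsEigenbasis e ρ l)
    (hf : IsEigenbasis f σ m) (hl : ∀ k, 0 < l k) (hm : ∀ j, 0 < m j) (hsum : Summable l) :
    IsRelativeEntropy b ρ σ (trElem b (ρ * X)) := by
  set D : ℕ → E →L[ℂ] E := fun n => cfc (negLogTrunc n) σ - cfc (negLogTrunc n) ρ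
  have hD (n k j) : ⟪f j, D n (e k)⟫_ℂ =
      (negLogTrunc n (m j) - negLogTrunc n (l k) : ℝ) * ⟪f j, e k⟫_ℂ :=
    he.inner_cfc_sub_cfc_apply hf hρ.isSelfAdjoint hσ.isSelfAdjoint
      ((continuousOn_negLogTrunc n).mono fun _ hx => spectrum_nonneg_of_nonneg hρ hx)
      ((continuousOn_negLogTrunc n).mono fun _ hx => spectrum_nonneg_of_nonneg hσ hx) k j
  have hX (k j) : ⟪f j, X.adjoint (e k)⟫_ℂ =
      (Real.log (l k) - Real.log (m j) : ℝ) * ⟪f j, e k⟫_ℂ := by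
    rw [X.adjoint_inner_right, ← inner_conj_symm, h.inner_apply hρ hσ he hf (hl k) (hm j), map_mul,
      Complex.conj_ofReal, inner_conj_symm]
  have hle (n k j) : ‖⟪f j, D n (e k)⟫_ℂ‖ ≤ ‖⟪f j, X.adjoint (e k)⟫_ℂ‖ := by
    rw [hD, hX, norm_mul, norm_mul, Complex.norm_real, Complex.norm_real, norm_sub_rev (Real.log _)]
    exact mul_le_mul_of_nonneg_right (abs_negLogTrunc_sub_le n (hm j) (hl k)) (norm_nonneg _)
  have hlim (k j) : Tendsto (fun n => ⟪f j, D n (e k)⟫_ℂ) atTop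
      (nhds ⟪f j, X.adjoint (e k)⟫_ℂ) := by
    have hlog := (tendsto_negLogTrunc (hm j).ne').sub (tendsto_negLogTrunc (hl k).ne')
    rw [neg_sub_neg] at hlog
    simp only [hD, hX]
    exact ((Complex.continuous_ofReal.tendsto _).comp hlog).mul_const _
  refine he.tendsto_trElem_mul b hsum (C := ‖X.adjoint‖) (fun n k => ?_) fun k => ?_
  · exact (norm_le_norm_of_norm_inner_le f (hle n k)).trans
      (X.adjoint.unit_le_opNorm _ (e.orthonormal.norm_eq_one k).le)
  · have hre : (⟪e k, X (e k)⟫_ℂ).re = (⟪e k, X.adjoint (e k)⟫_ℂ).re := by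
      rw [X.adjoint_inner_right, ← inner_conj_symm, Complex.conj_re]
    rw [hre]
    exact (Complex.continuous_re.tendsto _).comp
      (tendsto_inner_of_norm_inner_le f (fun n => hle n k) (hlim k) (e k))

theorem IsArakiFamily.apply_zero {ρ X : E →L[ℂ] E} {F : ℂ → E →L[ℂ] E}
    (hF : IsArakiFamily ρ X F) (hρ : IsSelfAdjoint ρ) : F 0 = X := by
  simpa [opow_zero hρ] using hF.2.2.1 0 le_rfl (by norm_num)

theorem statement13_general (b : HilbertBasis ι ℂ E) {ρ σ X : E →L[ℂ] E}
    (hρ : IsFiniteWeight b ρ) (hσ : IsFiniteWeight b σ) (hσX : IsExpPerturbed ρ σ X) :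
    IsRelativeEntropy b ρ σ (trElem b (ρ * X)) ∧
      |trElem b (ρ * X)| ≤ ‖X‖ * trElem b ρ := by
  obtain ⟨_, e, l, he, hl⟩ := hρ.exists_isEigenbasis
  obtain ⟨_, f, m, hf, hm⟩ := hσ.exists_isEigenbasis
  have hsum : Summable l := he.summable b (fun k => (hl k).le) hρ.2.2
  exact ⟨isRelativeEntropy_trElem_mul b hσX hρ.1 hσ.1 he hf hl hm hsum,
    he.abs_trElem_mul_le b hsum (fun k => (hl k).le) X⟩

end ComplexHilbertSpace

/-- Let `ρ` be a faithful density operator (`Tr ρ = 1`) and let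
`σ = ρ_X = exp (-(H₀+X))` with `ρ = exp (-H₀)` and `X` a bounded (self-adjoint) operator
satisfying the Araki condition for `ρ` (with Araki family `F` bounded by `M = ‖X‖_A`).
Then the relative entropy `S(ρ|σ) = Tr (ρ (log ρ - log σ))` is finite; indeed
`S(ρ|σ) = Tr (ρ X)`, so `|S(ρ|σ)| ≤ ‖X‖ · Tr ρ ≤ ‖X‖_A · Tr ρ`. -/
theorem statement13 {ι : Type*} (b : HilbertBasis ι ℂ H) (ρ σ X : H →L[ℂ] H)
    (hρ : IsFiniteWeight b ρ) (hρtr : trElem b ρ = 1) (hσ : IsFiniteWeight b σ)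
    (hX : IsSelfAdjoint X)
    (F : ℂ → H →L[ℂ] H) (hF : IsArakiFamily ρ X F)
    (M : ℝ) (hM : ∀ t ∈ ball (0:ℂ) (1/2), ‖F t‖ ≤ M)
    (hσX : IsExpPerturbed ρ σ X) :
    ∃ S : ℝ, IsRelativeEntropy b ρ σ S ∧ S = trElem b (ρ * X) ∧
      |S| ≤ ‖X‖ * trElem b ρ ∧ |S| ≤ M * trElem b ρ := by
  obtain ⟨hS, hbound⟩ := statement13_general b hρ hσ hσX
  have hXM : ‖X‖ ≤ M := hF.apply_zero hρ.1.isSelfAdjoint ▸ hM 0 (by simp)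
  refine ⟨_, hS, rfl, hbound, hbound.trans (mul_le_mul_of_nonneg_right hXM ?_)⟩
  exact hρtr ▸ zero_le_one
end
end

section
/- Let ρ = exp(−H₀) be a finite faithful weight on a separable Hilbert space H, let X and Y be bounded operators each satisfying the Araki condition for ρ, and let λ ∈ (0,1). Then λX + (1−λ)Y satisfies the Araki condition for ρ, and if the weights ρ_X = exp(−(H₀+X)) and ρ_Y = exp(−(H₀+Y)) are both nearby ρ, then the weight ρ_{λX+(1−λ)Y} = exp(−(H₀ + λX + (1−λ)Y)) is also nearby ρ, with constant exp(λ‖X‖_A + (1−λ)‖Y‖_A). Hence the set of weights nearby ρ carries the canonical (+1)-affine structure via convex combinations of the relative Hamiltonians. -/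
open scoped InnerProductSpace ENNReal NNReal
open MeasureTheory Metric Filter

noncomputable section

variable {H : Type*} [NormedAddCommGroup H] [InnerProductSpace ℂ H] [CompleteSpace H]
  [TopologicalSpace.SeparableSpace H]

/-!
For `σ = exp (-(H₀ + Z))` and `0 ≤ T < 1/2`, the path `A s = ρ ^ (T - s) * σ ^ s` joins `ρ ^ T` to
`σ ^ T`. Multiplying the Duhamel formula by `ρ ^ (T - s)` and substituting `ρ ^ t * Z = F t * ρ ^ t`
turns it into the linear equation `A' s = -F (T - s) * A s`, whose coefficient has norm at most `M`.
Grönwall's inequality along each orbit `s ↦ A s ξ`, run forwards and backwards, gives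
`‖σ ^ T ξ‖ ≤ exp (M * T) * ‖ρ ^ T ξ‖` and the same bound with `ρ` and `σ` exchanged. Letting
`T → 1/2` and squaring yields `exp (-M) • ρ ≤ σ ≤ exp M • ρ`. The Araki condition is linear in the
operator, so the case of interest is `Z = λ X + (1 - λ) Y`.
-/

section Gronwall

variable {E : Type*} [NormedAddCommGroup E] [NormedSpace ℝ E] {f f' : ℝ → E} {a b K : ℝ}

theorem norm_right_le_exp_mul_norm_left_of_norm_deriv_le (hab : a ≤ b)
    (hf : ∀ t ∈ Set.Icc a b, HasDerivWithinAt f (f' t) (Set.Icc a b) t)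
    (hK : ∀ t ∈ Set.Icc a b, ‖f' t‖ ≤ K * ‖f t‖) :
    ‖f b‖ ≤ Real.exp (K * (b - a)) * ‖f a‖ := by
  have hderiv : ∀ t ∈ Set.Ico a b, HasDerivWithinAt f (f' t) (Set.Ici t) t := fun t ht =>
    (hf t (Set.Ico_subset_Icc_self ht)).mono_of_mem_nhdsWithin (Icc_mem_nhdsGE_of_mem ht)
  have hbound := norm_le_gronwallBound_of_norm_deriv_right_le (ε := 0)
    (HasDerivWithinAt.continuousOn hf) hderiv le_rfl
    (fun t ht => by simpa only [add_zero] using hK t (Set.Ico_subset_Icc_self ht))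
    b (Set.right_mem_Icc.2 hab)
  rwa [gronwallBound_ε0, mul_comm] at hbound

theorem norm_left_le_exp_mul_norm_right_of_norm_deriv_le (hab : a ≤ b)
    (hf : ∀ t ∈ Set.Icc a b, HasDerivWithinAt f (f' t) (Set.Icc a b) t)
    (hK : ∀ t ∈ Set.Icc a b, ‖f' t‖ ≤ K * ‖f t‖) :
    ‖f a‖ ≤ Real.exp (K * (b - a)) * ‖f b‖ := by
  have hmaps : Set.MapsTo (fun t => a + b - t) (Set.Icc a b) (Set.Icc a b) := fun t ht =>
    ⟨by linarith [ht.2], by linarith [ht.1]⟩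
  have hreflected : ∀ t ∈ Set.Icc a b,
      HasDerivWithinAt (fun t => f (a + b - t)) (-f' (a + b - t)) (Set.Icc a b) t := by
    intro t ht
    simpa only [neg_smul, one_smul, Function.comp_def] using
      (hf _ (hmaps ht)).scomp t ((hasDerivWithinAt_id t _).const_sub (a + b)) hmaps
  simpa only [add_sub_cancel_right, add_sub_cancel_left] using
    norm_right_le_exp_mul_norm_left_of_norm_deriv_le hab hreflected
      (fun t ht => by simpa only [norm_neg] using hK _ (hmaps ht))

end Gronwall

section Loewner

open scoped InnerProduct

variable {E F G : Type*} [NormedAddCommGroup E] [InnerProductSpace ℂ E] [CompleteSpace E]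
  [NormedAddCommGroup F] [InnerProductSpace ℂ F] [CompleteSpace F]
  [NormedAddCommGroup G] [InnerProductSpace ℂ G] [CompleteSpace G]

theorem adjoint_comp_self_le_sq_smul_of_norm_apply_le {A : E →L[ℂ] F} {B : E →L[ℂ] G} {c : ℝ}
    (h : ∀ ξ, ‖A ξ‖ ≤ c * ‖B ξ‖) : A† ∘L A ≤ c ^ 2 • (B† ∘L B) := by
  rw [ContinuousLinearMap.le_def, ContinuousLinearMap.isPositive_def]
  refine ⟨((IsSelfAdjoint.smul (.all (c ^ 2)) B.isPositive_adjoint_comp_self.isSelfAdjoint).sub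
    A.isPositive_adjoint_comp_self.isSelfAdjoint).isSymmetric, fun ξ => ?_⟩
  have hsq : ‖A ξ‖ ^ 2 ≤ c ^ 2 * ‖B ξ‖ ^ 2 := by
    rw [← mul_pow]
    exact pow_le_pow_left₀ (norm_nonneg _) (h ξ) 2
  simpa only [ContinuousLinearMap.reApplyInnerSelf_apply, sub_apply,
    smul_apply, inner_sub_left, inner_smul_left_eq_smul, map_sub,
    RCLike.smul_re, ← ContinuousLinearMap.apply_norm_sq_eq_inner_adjoint_left, sub_nonneg] using hsq

end Loewner

section RealPowers

variable {E : Type*} [NormedAddCommGroup E] [InnerProductSpace ℂ E] [CompleteSpace E]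
  {a : E →L[ℂ] E} {s t : ℝ}

theorem isSelfAdjoint_opow (a : E →L[ℂ] E) (t : ℝ) : IsSelfAdjoint (opow a t) :=
  cfc_predicate _ _

theorem opow_zero_s14 (ha : IsSelfAdjoint a) : opow a 0 = 1 := by
  simp only [opow, Real.rpow_zero, cfc_const_one ℝ a]

theorem opow_one_s14 (ha : IsSelfAdjoint a) : opow a 1 = a := by
  simp only [opow, Real.rpow_one, cfc_id' ℝ a]

theorem opow_add (ha : 0 ≤ a) (hs : 0 ≤ s) (ht : 0 ≤ t) :
    opow a (s + t) = opow a s * opow a t := by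
  rw [opow, opow, opow, ← cfc_mul (fun x : ℝ => x ^ s) (fun x : ℝ => x ^ t) a
    (Real.continuous_rpow_const hs).continuousOn (Real.continuous_rpow_const ht).continuousOn]
  exact cfc_congr fun x hx => Real.rpow_add_of_nonneg (spectrum_nonneg_of_nonneg ha hx) hs ht

theorem norm_opow_le_one_add_norm_rpow (ha : 0 ≤ a) (hs : 0 ≤ s) (hst : s ≤ t) :
    ‖opow a s‖ ≤ (1 + ‖a‖) ^ t := by
  refine norm_cfc_le (by positivity) fun x hx => ?_
  have hx_nonneg : 0 ≤ x := spectrum_nonneg_of_nonneg ha hx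
  have hx_le : x ≤ ‖a‖ := by
    simpa only [id_eq, cfc_id ℝ a, Real.norm_of_nonneg hx_nonneg] using
      norm_apply_le_norm_cfc id a hx
  rw [Real.norm_of_nonneg (Real.rpow_nonneg hx_nonneg s)]
  calc x ^ s ≤ (1 + ‖a‖) ^ s := Real.rpow_le_rpow hx_nonneg (by linarith) hs
    _ ≤ (1 + ‖a‖) ^ t :=
      Real.rpow_le_rpow_of_exponent_le (le_add_of_nonneg_right (norm_nonneg a)) hst

theorem continuousAt_opow (a : E →L[ℂ] E) (ht : 0 < t) : ContinuousAt (opow a) t := by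
  refine continuousAt_cfc_fun ?_ ?_
  · have : CompactSpace (spectrum ℝ a) := isCompact_iff_compactSpace.1 (spectrum.isCompact a)
    rw [tendstoUniformlyOn_iff_tendstoUniformly_comp_coe]
    refine ContinuousOn.tendstoUniformly (f := fun (s : ℝ) (x : spectrum ℝ a) => (x : ℝ) ^ s)
      (Ioi_mem_nhds ht) fun p hp => ContinuousAt.continuousWithinAt ?_
    exact (continuous_subtype_val.comp continuous_snd).continuousAt.rpow
      continuous_fst.continuousAt (Or.inr hp.1)
  · filter_upwards [Ioi_mem_nhds ht] with s hs
    exact (Real.continuous_rpow_const hs.le).continuousOn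

theorem adjoint_opow_half_comp_self (ha : 0 ≤ a) :
    (opow a (1 / 2)).adjoint ∘L opow a (1 / 2) = a := by
  rw [(isSelfAdjoint_opow a _).adjoint_eq, ← ContinuousLinearMap.mul_def,
    ← opow_add ha (by norm_num) (by norm_num), add_halves, opow_one_s14 (.of_nonneg ha)]

end RealPowers

section Perturbation

variable {E : Type*} [NormedAddCommGroup E] [InnerProductSpace ℂ E] [CompleteSpace E]
  {ρ σ X Y Z : E →L[ℂ] E} {F FX FY : ℂ → E →L[ℂ] E} {M T s t : ℝ}

theorem le_exp_smul_of_norm_opow_apply_le (hσ : 0 ≤ σ) (hρ : 0 ≤ ρ)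
    (h : ∀ T ∈ Set.Ioo (0 : ℝ) (1 / 2), ∀ ξ,
      ‖opow σ T ξ‖ ≤ Real.exp (M * T) * ‖opow ρ T ξ‖) :
    σ ≤ Real.exp M • ρ := by
  have htendsto (a : E →L[ℂ] E) (ξ : E) :
      Tendsto (fun T => ‖opow a T ξ‖) (nhdsWithin (1 / 2) (Set.Iio (1 / 2)))
        (nhds ‖opow a (1 / 2) ξ‖) :=
    ((continuousAt_opow a (by norm_num)).clm_apply continuousAt_const).norm.tendsto.mono_left
      nhdsWithin_le_nhds
  have hexp : Tendsto (fun T => Real.exp (M * T)) (nhdsWithin (1 / 2) (Set.Iio (1 / 2)))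
      (nhds (Real.exp (M * (1 / 2)))) :=
    (by fun_prop : Continuous fun T => Real.exp (M * T)).continuousAt.tendsto.mono_left
      nhdsWithin_le_nhds
  have hhalf (ξ : E) : ‖opow σ (1 / 2) ξ‖ ≤ Real.exp (M * (1 / 2)) * ‖opow ρ (1 / 2) ξ‖ := by
    refine le_of_tendsto_of_tendsto (htendsto σ ξ) (hexp.mul (htendsto ρ ξ)) ?_
    filter_upwards [Ioo_mem_nhdsLT (by norm_num : (0 : ℝ) < 1 / 2)] with T hT
    exact h T hT ξ
  have hsq : Real.exp (M * (1 / 2)) ^ 2 = Real.exp M := by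
    rw [← Real.exp_nat_mul]
    ring_nf
  simpa only [adjoint_opow_half_comp_self hσ, adjoint_opow_half_comp_self hρ, hsq] using
    adjoint_comp_self_le_sq_smul_of_norm_apply_le hhalf

theorem ofReal_sub_mem_ball {R : ℝ} (hT : T < R) (hs : s ∈ Set.Icc 0 T) :
    ((T - s : ℝ) : ℂ) ∈ ball 0 R := by
  rw [mem_ball_zero_iff, Complex.norm_real, Real.norm_of_nonneg (sub_nonneg.2 hs.2)]
  exact (sub_le_self T hs.1).trans_lt hT

theorem intervalIntegrable_opow_mul_mul_opow_s14 (hρ : 0 ≤ ρ) (hσ : 0 ≤ σ) (Z : E →L[ℂ] E)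
    (ht : 0 ≤ t) :
    IntervalIntegrable (fun s => opow ρ (t - s) * Z * opow σ s) volume 0 t := by
  rw [intervalIntegrable_iff_integrableOn_Ioo_of_le ht]
  refine IntegrableOn.of_bound measure_Ioo_lt_top ?_
    ((1 + ‖ρ‖) ^ t * ‖Z‖ * (1 + ‖σ‖) ^ t) ?_
  · refine ContinuousOn.aestronglyMeasurable (fun s hs => ContinuousAt.continuousWithinAt ?_)
      measurableSet_Ioo
    have hρ_cont : ContinuousAt (fun s => opow ρ (t - s)) s :=
      (continuousAt_opow ρ (sub_pos.2 hs.2)).comp (f := fun s => t - s) (by fun_prop)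
    exact (hρ_cont.mul continuousAt_const).mul (continuousAt_opow σ hs.1)
  · refine (ae_restrict_iff' measurableSet_Ioo).2 (Eventually.of_forall fun s hs => ?_)
    refine norm_mul_le_of_le (norm_mul_le_of_le ?_ le_rfl) ?_
    · exact norm_opow_le_one_add_norm_rpow hρ (sub_nonneg.2 hs.2.le) (sub_le_self t hs.1.le)
    · exact norm_opow_le_one_add_norm_rpow hσ hs.1.le hs.2.le

namespace IsExpPerturbed

theorem opow_sub_mul_opow_eq (h : IsExpPerturbed ρ σ Z) (hρ : 0 ≤ ρ) (hσ : 0 ≤ σ)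
    (hs : 0 ≤ s) (hst : s ≤ t) :
    opow ρ (t - s) * opow σ s =
      opow ρ t - ∫ r in (0 : ℝ)..s, opow ρ (t - r) * Z * opow σ r := by
  have hsplit (r : ℝ) (hr : r ≤ s) : opow ρ (t - r) = opow ρ (t - s) * opow ρ (s - r) := by
    rw [← opow_add hρ (sub_nonneg.2 hst) (sub_nonneg.2 hr), sub_add_sub_cancel]
  have hfactor : ∫ r in (0 : ℝ)..s, opow ρ (t - r) * Z * opow σ r =
      opow ρ (t - s) * ∫ r in (0 : ℝ)..s, opow ρ (s - r) * Z * opow σ r := by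
    have hpull := (ContinuousLinearMap.mul ℝ (E →L[ℂ] E)
      (opow ρ (t - s))).intervalIntegral_comp_comm
        (intervalIntegrable_opow_mul_mul_opow_s14 hρ hσ Z hs)
    rw [ContinuousLinearMap.mul_apply'] at hpull
    rw [← hpull]
    refine intervalIntegral.integral_congr fun r hr => ?_
    rw [Set.uIcc_of_le hs] at hr
    simp only [hsplit r hr.2, ContinuousLinearMap.mul_apply', mul_assoc]
  rw [hfactor, h s hs, mul_sub, ← opow_add hρ (sub_nonneg.2 hst) hs, sub_add_cancel]

theorem continuousOn_opow_sub_mul_opow (h : IsExpPerturbed ρ σ Z) (hρ : 0 ≤ ρ) (hσ : 0 ≤ σ)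
    (ht : 0 ≤ t) : ContinuousOn (fun s => opow ρ (t - s) * opow σ s) (Set.Icc 0 t) := by
  -- `opow ρ` need not be norm continuous at `0`; the endpoints are covered by the integral formula.
  have hprimitive := intervalIntegral.continuousOn_primitive_interval'
    (intervalIntegrable_opow_mul_mul_opow_s14 hρ hσ Z ht) Set.left_mem_uIcc
  rw [Set.uIcc_of_le ht] at hprimitive
  exact (continuousOn_const.sub hprimitive).congr fun s hs =>
    h.opow_sub_mul_opow_eq hρ hσ hs.1 hs.2

theorem hasDerivWithinAt_opow_sub_mul_opow (h : IsExpPerturbed ρ σ Z) (hρ : 0 ≤ ρ)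
    (hσ : 0 ≤ σ) (hF : IsArakiFamily ρ Z F) (hT : T < 1 / 2) (hs : s ∈ Set.Icc 0 T) :
    HasDerivWithinAt (fun s => opow ρ (T - s) * opow σ s)
      (-(F ↑(T - s) * (opow ρ (T - s) * opow σ s))) (Set.Icc 0 T) s := by
  have hT_nonneg : 0 ≤ T := hs.1.trans hs.2
  have hF_cont : ContinuousOn (fun r : ℝ => F ↑(T - r)) (Set.Icc 0 T) :=
    hF.1.continuousOn.comp (by fun_prop) fun _ hr => ofReal_sub_mem_ball hT hr
  have hpicard := ODE.hasDerivWithinAt_picard_Icc (u := Set.univ)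
    (f := fun r x => -(F ↑(T - r) * x)) (Set.left_mem_Icc.2 hT_nonneg)
    (((hF_cont.comp continuousOn_fst fun p hp => hp.1).mul continuousOn_snd).neg)
    (h.continuousOn_opow_sub_mul_opow hρ hσ hT_nonneg) (fun r _ => Set.mem_univ _) (opow ρ T) hs
  refine hpicard.congr_of_mem (fun r hr => ?_) hs
  rw [h.opow_sub_mul_opow_eq hρ hσ hr.1 hr.2, ODE.picard_apply, intervalIntegral.integral_neg,
    ← sub_eq_add_neg]
  congr 1
  refine intervalIntegral.integral_congr fun q hq => ?_
  rw [Set.uIcc_of_le hr.1] at hq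
  have hqT : q ≤ T := hq.2.trans hr.2
  simp only [← mul_assoc, hF.2.2.1 (T - q) (sub_nonneg.2 hqT) (by linarith [hq.1])]

theorem norm_opow_apply_le (h : IsExpPerturbed ρ σ Z) (hρ : 0 ≤ ρ) (hσ : 0 ≤ σ)
    (hF : IsArakiFamily ρ Z F) (hM : ∀ t ∈ ball (0 : ℂ) (1 / 2), ‖F t‖ ≤ M)
    (hT : T ∈ Set.Ico (0 : ℝ) (1 / 2)) (ξ : E) :
    ‖opow σ T ξ‖ ≤ Real.exp (M * T) * ‖opow ρ T ξ‖ ∧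
      ‖opow ρ T ξ‖ ≤ Real.exp (M * T) * ‖opow σ T ξ‖ := by
  have hderiv : ∀ s ∈ Set.Icc 0 T, HasDerivWithinAt (fun s => opow ρ (T - s) (opow σ s ξ))
      (-(F ↑(T - s) (opow ρ (T - s) (opow σ s ξ)))) (Set.Icc 0 T) s := fun s hs =>
    ((ContinuousLinearMap.apply ℂ E ξ).restrictScalars ℝ).hasFDerivAt.comp_hasDerivWithinAt s
      (h.hasDerivWithinAt_opow_sub_mul_opow hρ hσ hF hT.2 hs)
  have hbound : ∀ s ∈ Set.Icc 0 T, ‖-(F ↑(T - s) (opow ρ (T - s) (opow σ s ξ)))‖ ≤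
      M * ‖opow ρ (T - s) (opow σ s ξ)‖ := fun s hs => by
    rw [norm_neg]
    exact (F ↑(T - s)).le_of_opNorm_le (hM _ (ofReal_sub_mem_ball hT.2 hs)) _
  have hright := norm_right_le_exp_mul_norm_left_of_norm_deriv_le hT.1 hderiv hbound
  have hleft := norm_left_le_exp_mul_norm_right_of_norm_deriv_le hT.1 hderiv hbound
  simp only [sub_self, sub_zero, opow_zero_s14 (.of_nonneg hρ), opow_zero_s14 (.of_nonneg hσ),
    one_apply_eq_self] at hright hleft
  exact ⟨hright, hleft⟩

theorem le_exp_smul (h : IsExpPerturbed ρ σ Z) (hρ : 0 ≤ ρ) (hσ : 0 ≤ σ)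
    (hF : IsArakiFamily ρ Z F) (hM : ∀ t ∈ ball (0 : ℂ) (1 / 2), ‖F t‖ ≤ M) :
    σ ≤ Real.exp M • ρ :=
  le_exp_smul_of_norm_opow_apply_le hσ hρ fun _ hT ξ =>
    (h.norm_opow_apply_le hρ hσ hF hM (Set.Ioo_subset_Ico_self hT) ξ).1

theorem inv_exp_smul_le (h : IsExpPerturbed ρ σ Z) (hρ : 0 ≤ ρ) (hσ : 0 ≤ σ)
    (hF : IsArakiFamily ρ Z F) (hM : ∀ t ∈ ball (0 : ℂ) (1 / 2), ‖F t‖ ≤ M) :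
    (Real.exp M)⁻¹ • ρ ≤ σ := by
  have hle : ρ ≤ Real.exp M • σ := le_exp_smul_of_norm_opow_apply_le hρ hσ fun _ hT ξ =>
    (h.norm_opow_apply_le hρ hσ hF hM (Set.Ioo_subset_Ico_self hT) ξ).2
  simpa only [inv_smul_smul₀ (Real.exp_ne_zero M)] using
    smul_le_smul_of_nonneg_left hle (inv_nonneg.2 (Real.exp_nonneg M))

end IsExpPerturbed

namespace IsArakiFamily

theorem add (hX : IsArakiFamily ρ X FX) (hY : IsArakiFamily ρ Y FY) :
    IsArakiFamily ρ (X + Y) (FX + FY) := by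
  obtain ⟨hX_diff, ⟨MX, hMX⟩, hX_left, hX_right⟩ := hX
  obtain ⟨hY_diff, ⟨MY, hMY⟩, hY_left, hY_right⟩ := hY
  refine ⟨hX_diff.add hY_diff, ⟨MX + MY, fun t ht => norm_add_le_of_le (hMX t ht) (hMY t ht)⟩,
    fun t h0 h1 => ?_, fun t h0 h1 => ?_⟩
  · rw [Pi.add_apply, add_mul, mul_add, hX_left t h0 h1, hY_left t h0 h1]
  · rw [Pi.add_apply, add_mul, mul_add, hX_right t h0 h1, hY_right t h0 h1]

theorem const_smul (hX : IsArakiFamily ρ X FX) (c : ℝ) :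
    IsArakiFamily ρ (c • X) (c • FX) := by
  obtain ⟨hX_diff, ⟨MX, hMX⟩, hX_left, hX_right⟩ := hX
  refine ⟨hX_diff.const_smul c, ⟨‖c‖ * MX, fun t ht => ?_⟩, fun t h0 h1 => ?_, fun t h0 h1 => ?_⟩
  · exact (norm_smul c (FX t)).trans_le (mul_le_mul_of_nonneg_left (hMX t ht) (norm_nonneg c))
  · rw [Pi.smul_apply, smul_mul_assoc, mul_smul_comm, hX_left t h0 h1]
  · rw [Pi.smul_apply, smul_mul_assoc, mul_smul_comm, hX_right t h0 h1]

end IsArakiFamily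

theorem statement14_general (hρ : 0 ≤ ρ) (hFX : IsArakiFamily ρ X FX)
    (hFY : IsArakiFamily ρ Y FY) {MX MY : ℝ}
    (hMX : ∀ t ∈ ball (0 : ℂ) (1 / 2), ‖FX t‖ ≤ MX)
    (hMY : ∀ t ∈ ball (0 : ℂ) (1 / 2), ‖FY t‖ ≤ MY) (c d : ℝ) :
    SatisfiesAraki ρ (c • X + d • Y) ∧
    ∀ σ, 0 ≤ σ → IsExpPerturbed ρ σ (c • X + d • Y) →
      (Real.exp (|c| * MX + |d| * MY))⁻¹ • ρ ≤ σ ∧ σ ≤ Real.exp (|c| * MX + |d| * MY) • ρ := by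
  have hF := (hFX.const_smul c).add (hFY.const_smul d)
  have hM : ∀ t ∈ ball (0 : ℂ) (1 / 2), ‖(c • FX + d • FY) t‖ ≤ |c| * MX + |d| * MY :=
    fun t ht => norm_add_le_of_le
      ((norm_smul c (FX t)).trans_le (mul_le_mul_of_nonneg_left (hMX t ht) (abs_nonneg c)))
      ((norm_smul d (FY t)).trans_le (mul_le_mul_of_nonneg_left (hMY t ht) (abs_nonneg d)))
  exact ⟨⟨_, hF⟩, fun σ hσ h => ⟨h.inv_exp_smul_le hρ hσ hF hM, h.le_exp_smul hρ hσ hF hM⟩⟩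

end Perturbation

/-- Let `ρ = exp (-H₀)` be a finite faithful weight and let `X`, `Y` be
bounded (self-adjoint) operators satisfying the Araki condition for `ρ` (with Araki
families `FX`, `FY` bounded by `MX = ‖X‖_A`, `MY = ‖Y‖_A`), and let `λ ∈ (0,1)`.  Then
`λ X + (1-λ) Y` satisfies the Araki condition for `ρ`, and if the weights
`ρ_X = exp (-(H₀+X))` and `ρ_Y = exp (-(H₀+Y))` are both nearby `ρ`, then the weight
`ρ_{λX+(1-λ)Y} = exp (-(H₀ + λX + (1-λ)Y))` is also nearby `ρ`, with constant
`exp (λ ‖X‖_A + (1-λ) ‖Y‖_A)`.  Hence the weights nearby `ρ` carry the canonical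
`(+1)`-affine structure via convex combination of the relative Hamiltonians. -/
theorem statement14 {ι : Type*} (b : HilbertBasis ι ℂ H) (ρ : H →L[ℂ] H)
    (hρ : IsFiniteWeight b ρ) (X Y : H →L[ℂ] H)
    (hX : IsSelfAdjoint X) (hY : IsSelfAdjoint Y)
    (FX FY : ℂ → H →L[ℂ] H) (hFX : IsArakiFamily ρ X FX) (hFY : IsArakiFamily ρ Y FY)
    (MX MY : ℝ)
    (hMX : ∀ t ∈ ball (0:ℂ) (1/2), ‖FX t‖ ≤ MX)
    (hMY : ∀ t ∈ ball (0:ℂ) (1/2), ‖FY t‖ ≤ MY)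
    (l : ℝ) (hl : l ∈ Set.Ioo (0:ℝ) 1) :
    SatisfiesAraki ρ (l • X + (1 - l) • Y) ∧
    (∀ σX σY σZ : H →L[ℂ] H,
      IsFiniteWeight b σX → IsFiniteWeight b σY → IsFiniteWeight b σZ →
      IsExpPerturbed ρ σX X → IsExpPerturbed ρ σY Y →
      IsNearby σX ρ → IsNearby σY ρ →
      IsExpPerturbed ρ σZ (l • X + (1 - l) • Y) →
      (Real.exp (l * MX + (1 - l) * MY))⁻¹ • ρ ≤ σZ ∧
      σZ ≤ Real.exp (l * MX + (1 - l) * MY) • ρ) := by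
  have h := statement14_general hρ.1 hFX hFY hMX hMY l (1 - l)
  rw [abs_of_pos hl.1, abs_of_pos (sub_pos.2 hl.2)] at h
  exact ⟨h.1, fun _ _ σZ _ _ hσZ _ _ _ _ hZ => h.2 σZ hσZ.1 hZ⟩
end
end
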